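/- The second-variation form of the fundamental Scherk surface evaluated at the test functions φ²(u,v) = u − u⁵/4 and φ³(u,v) = v − v⁵/4 is negative: Q(φ²) < 0 and Q(φ³) < 0. -/

import Mathlib

noncomputable section
open MeasureTheory Real

/-- Dot product on `ℝ³ = ℝ × ℝ × ℝ`. -/
def dot3 (a b : ℝ × ℝ × ℝ) : ℝ := a.1 * b.1 + a.2.1 * b.2.1 + a.2.2 * b.2.2

/-- Cross product on `ℝ³ = ℝ × ℝ × ℝ`. -/
def cross3 (a b : ℝ × ℝ × ℝ) : ℝ × ℝ × ℝ :=
  (a.2.1 * b.2.2 - a.2.2 * b.2.1, a.2.2 * b.1 - a.1 * b.2.2, a.1 * b.2.1 - a.2.1 * b.1)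

/-- Euclidean norm on `ℝ³ = ℝ × ℝ × ℝ`. -/
def norm3 (a : ℝ × ℝ × ℝ) : ℝ := Real.sqrt (dot3 a a)

/-- Partial derivative in the first (`u`) variable. -/
def pdU {E : Type*} [NormedAddCommGroup E] [NormedSpace ℝ E] (f : ℝ × ℝ → E) (p : ℝ × ℝ) : E :=
  deriv (fun x => f (x, p.2)) p.1

/-- Partial derivative in the second (`v`) variable. -/
def pdV {E : Type*} [NormedAddCommGroup E] [NormedSpace ℝ E] (f : ℝ × ℝ → E) (p : ℝ × ℝ) : E :=
  deriv (fun y => f (p.1, y)) p.2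

/-- The fundamental domain `Ω₀ = (-1,1) × (-1,1)`. -/
def Ω₀ : Set (ℝ × ℝ) := Set.Ioo (-1 : ℝ) 1 ×ˢ Set.Ioo (-1 : ℝ) 1

/-- The fundamental Scherk parametrization. -/
def scherk (p : ℝ × ℝ) : ℝ × ℝ × ℝ :=
  (arctan (2 * p.1 / (p.1 ^ 2 + p.2 ^ 2 - 1)),
   arctan (-2 * p.2 / (p.1 ^ 2 + p.2 ^ 2 - 1)),
   (1 / 2) * Real.log (((p.1 ^ 2 - p.2 ^ 2 + 1) ^ 2 + 4 * p.1 ^ 2 * p.2 ^ 2) /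
     ((p.1 ^ 2 - p.2 ^ 2 - 1) ^ 2 + 4 * p.1 ^ 2 * p.2 ^ 2)))

def σu : ℝ × ℝ → ℝ × ℝ × ℝ := pdU scherk
def σv : ℝ × ℝ → ℝ × ℝ × ℝ := pdV scherk
def σuu : ℝ × ℝ → ℝ × ℝ × ℝ := pdU σu
def σuv : ℝ × ℝ → ℝ × ℝ × ℝ := pdV σu
def σvv : ℝ × ℝ → ℝ × ℝ × ℝ := pdV σv

/-- First fundamental form. -/
def g11 (p : ℝ × ℝ) : ℝ := dot3 (σu p) (σu p)
def g12 (p : ℝ × ℝ) : ℝ := dot3 (σu p) (σv p)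
def g22 (p : ℝ × ℝ) : ℝ := dot3 (σv p) (σv p)

def detg (p : ℝ × ℝ) : ℝ := g11 p * g22 p - g12 p ^ 2

/-- Components of the inverse metric `(gⁱʲ)`. -/
def ginv11 (p : ℝ × ℝ) : ℝ := g22 p / detg p
def ginv12 (p : ℝ × ℝ) : ℝ := -g12 p / detg p
def ginv22 (p : ℝ × ℝ) : ℝ := g11 p / detg p

/-- Unit normal `N = (σ_u × σ_v)/‖σ_u × σ_v‖`. -/
def NS (p : ℝ × ℝ) : ℝ × ℝ × ℝ :=
  (norm3 (cross3 (σu p) (σv p)))⁻¹ • cross3 (σu p) (σv p)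

/-- Second fundamental form. -/
def h11 (p : ℝ × ℝ) : ℝ := dot3 (σuu p) (NS p)
def h12 (p : ℝ × ℝ) : ℝ := dot3 (σuv p) (NS p)
def h22 (p : ℝ × ℝ) : ℝ := dot3 (σvv p) (NS p)

/-- Gaussian curvature. -/
def κ (p : ℝ × ℝ) : ℝ := (h11 p * h22 p - h12 p ^ 2) / detg p

/-- The second-variation quadratic form of the fundamental Scherk surface. -/
def Q (φ : ℝ × ℝ → ℝ) : ℝ :=
  ∫ p in Ω₀,
    (ginv11 p * pdU φ p ^ 2 + 2 * ginv12 p * pdU φ p * pdV φ p + ginv22 p * pdV φ p ^ 2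
      + 2 * κ p * φ p ^ 2) * Real.sqrt (detg p)

/-- The polarized second-variation bilinear form. -/
def B (φ ψ : ℝ × ℝ → ℝ) : ℝ :=
  ∫ p in Ω₀,
    (ginv11 p * pdU φ p * pdU ψ p + ginv12 p * pdU φ p * pdV ψ p
      + ginv12 p * pdV φ p * pdU ψ p + ginv22 p * pdV φ p * pdV ψ p
      + 2 * κ p * φ p * ψ p) * Real.sqrt (detg p)

/-- The test functions `φ¹, φ², φ³`. -/
def Φ : Fin 3 → (ℝ × ℝ → ℝ) :=
  ![fun p => (p.1 * p.2) ^ 2 + 2,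
    fun p => p.1 - p.1 ^ 5 / 4,
    fun p => p.2 - p.2 ^ 5 / 4]

/-!
The derivatives of the two arctangents and the logarithm are imaginary and real parts of logarithmic
derivatives of rational functions of `z = u + iv`, which gives the Weierstrass representation
`σ_u - i σ_v = 2 / (1 - z⁴) · (z² - 1, -i (z² + 1), 2z)`, whose Gauss map is `z` itself.
Hence `σ` is conformal, `g = λ (du² + dv²)`, with `κ λ = -4 / (1 + u² + v²)²`, and
`Q φ = ∫ |∇φ|² - 8 φ² / (1 + u² + v²)²`. For `φ = u - u⁵/4` the weight `s⁻²`, `s = 1 + u² + v²`, is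
replaced by a cubic polynomial in `s` lying below it, and the resulting polynomial integral is
negative. The formula for `Q` is symmetric in `u` and `v`, which settles `φ = v - v⁵/4`.
-/

open scoped ComplexConjugate Topology

/-- The complex coordinate `z = u + iv` of the parameter plane. -/
def zCoord : (ℝ × ℝ) ≃L[ℝ] ℂ := Complex.equivRealProdCLM.symm

/-- The componentwise real part `ℂ³ → ℝ³`, which turns isotropic holomorphic curves into minimal
surfaces. -/
def re3 : (ℂ × ℂ × ℂ) →L[ℝ] ℝ × ℝ × ℝ :=
  Complex.reCLM.prodMap (Complex.reCLM.prodMap Complex.reCLM)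

/-- The Weierstrass direction whose Gauss map is the identity: multiplied by a holomorphic density
and integrated, its real part is a conformal minimal immersion. -/
def isotropicVec (z : ℂ) : ℂ × ℂ × ℂ := (z ^ 2 - 1, -Complex.I * (z ^ 2 + 1), 2 * z)

/-- Inverse stereographic projection scaled by `1 + ‖z‖²`, a normal to the real and imaginary
parts of `isotropicVec z`. -/
def stereoNormal (z : ℂ) : ℝ × ℝ × ℝ := (-2 * z.re, -2 * z.im, ‖z‖ ^ 2 - 1)

/-- The density `f` of the Weierstrass representation `σ_u = Re (f (z) • isotropicVec z)` of the
fundamental Scherk surface. -/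
def scherkDensity (z : ℂ) : ℂ := 2 / (1 - z ^ 4)

section LinearAlgebra

lemma dot3_smul_right (c : ℝ) (a b : ℝ × ℝ × ℝ) : dot3 a (c • b) = c * dot3 a b := by
  simp only [dot3, Prod.smul_fst, Prod.smul_snd, smul_eq_mul]
  ring

lemma norm3_smul (c : ℝ) (a : ℝ × ℝ × ℝ) : norm3 (c • a) = |c| * norm3 a := by
  rw [norm3, norm3, ← sqrt_sq_eq_abs, ← sqrt_mul (sq_nonneg c)]
  simp only [dot3, Prod.smul_fst, Prod.smul_snd, smul_eq_mul]
  ring_nf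

lemma re3_apply (a : ℂ × ℂ × ℂ) : re3 a = (a.1.re, a.2.1.re, a.2.2.re) := rfl

lemma dot3_add_left (a b c : ℝ × ℝ × ℝ) : dot3 (a + b) c = dot3 a c + dot3 b c := by
  simp only [dot3, Prod.fst_add, Prod.snd_add]
  ring

end LinearAlgebra

section IsotropicVec

variable (a b z : ℂ)

lemma sq_norm_eq_re_sq_add_im_sq : ‖z‖ ^ 2 = z.re ^ 2 + z.im ^ 2 := by
  rw [Complex.sq_norm, Complex.normSq_apply]
  ring

lemma re3_smul_isotropicVec :
    re3 (a • isotropicVec z) =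
      (a.re * (z.re ^ 2 - z.im ^ 2 - 1) - 2 * a.im * z.re * z.im,
        2 * a.re * z.re * z.im + a.im * (z.re ^ 2 - z.im ^ 2 + 1),
        2 * (a.re * z.re - a.im * z.im)) := by
  simp only [re3_apply, isotropicVec, Prod.smul_mk, smul_eq_mul, pow_two, Complex.mul_re,
    Complex.mul_im, Complex.sub_re, Complex.sub_im, Complex.add_re, Complex.add_im,
    Complex.neg_re, Complex.neg_im, Complex.I_re, Complex.I_im, Complex.one_re, Complex.one_im,
    Complex.re_ofNat, Complex.im_ofNat, Prod.mk.injEq]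
  refine ⟨?_, ?_, ?_⟩ <;> ring

lemma dot3_re3_smul_isotropicVec :
    dot3 (re3 (a • isotropicVec z)) (re3 (b • isotropicVec z)) =
      (a * conj b).re * (1 + ‖z‖ ^ 2) ^ 2 := by
  simp only [dot3, re3_smul_isotropicVec, sq_norm_eq_re_sq_add_im_sq, Complex.mul_re,
    Complex.conj_re, Complex.conj_im]
  ring

lemma cross3_re3_smul_isotropicVec :
    cross3 (re3 (a • isotropicVec z)) (re3 (b • isotropicVec z)) =
      ((conj a * b).im * (1 + ‖z‖ ^ 2)) • stereoNormal z := by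
  simp only [cross3, re3_smul_isotropicVec, stereoNormal, sq_norm_eq_re_sq_add_im_sq,
    Complex.mul_im, Complex.conj_re, Complex.conj_im, Prod.smul_mk, smul_eq_mul, Prod.mk.injEq]
  refine ⟨?_, ?_, ?_⟩ <;> ring

lemma dot3_re3_smul_isotropicVec_stereoNormal :
    dot3 (re3 (a • isotropicVec z)) (stereoNormal z) = 0 := by
  simp only [dot3, re3_smul_isotropicVec, stereoNormal, sq_norm_eq_re_sq_add_im_sq]
  ring

lemma norm3_stereoNormal : norm3 (stereoNormal z) = 1 + ‖z‖ ^ 2 := by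
  rw [norm3, sqrt_eq_iff_mul_self_eq_of_pos (by positivity)]
  simp only [dot3, stereoNormal, sq_norm_eq_re_sq_add_im_sq]
  ring

lemma hasDerivAt_isotropicVec :
    HasDerivAt isotropicVec (2 * z, -Complex.I * (2 * z), 2) z := by
  have hsq : HasDerivAt (fun w : ℂ => w ^ 2) (2 * z) z := by simpa using hasDerivAt_pow 2 z
  exact (hsq.sub_const 1).prodMk
    (((hsq.add_const 1).const_mul _).prodMk (by simpa using (hasDerivAt_id z).const_mul (2 : ℂ)))

lemma dot3_re3_smul_deriv_isotropicVec_stereoNormal :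
    dot3 (re3 (a • deriv isotropicVec z)) (stereoNormal z) = -2 * a.re * (1 + ‖z‖ ^ 2) := by
  have hre : re3 (a • deriv isotropicVec z) =
      (2 * (a.re * z.re - a.im * z.im), 2 * (a.re * z.im + a.im * z.re), 2 * a.re) := by
    simp only [(hasDerivAt_isotropicVec z).deriv, re3_apply, Prod.smul_mk, smul_eq_mul,
      Complex.mul_re, Complex.mul_im, Complex.neg_re, Complex.neg_im, Complex.I_re, Complex.I_im,
      Complex.re_ofNat, Complex.im_ofNat, Prod.mk.injEq]
    refine ⟨?_, ?_, ?_⟩ <;> ring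
  simp only [hre, dot3, stereoNormal, sq_norm_eq_re_sq_add_im_sq]
  ring

end IsotropicVec

section PartialDerivatives

lemma hasDerivAt_zCoord_left (p : ℝ × ℝ) : HasDerivAt (fun x => zCoord (x, p.2)) 1 p.1 := by
  have h := zCoord.hasFDerivAt.comp_hasDerivAt p.1
    ((hasDerivAt_id p.1).prodMk (hasDerivAt_const p.1 p.2))
  exact h.congr_deriv (by simp [zCoord, Complex.ext_iff])

lemma hasDerivAt_zCoord_right (p : ℝ × ℝ) :
    HasDerivAt (fun y => zCoord (p.1, y)) Complex.I p.2 := by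
  have h := zCoord.hasFDerivAt.comp_hasDerivAt p.2
    ((hasDerivAt_const p.2 p.1).prodMk (hasDerivAt_id p.2))
  exact h.congr_deriv (by simp [zCoord, Complex.ext_iff])

variable {E : Type*} [NormedAddCommGroup E] [NormedSpace ℝ E] {f g : ℝ × ℝ → E} {p : ℝ × ℝ}

lemma pdU_congr (h : f =ᶠ[𝓝 p] g) : pdU f p = pdU g p :=
  Filter.EventuallyEq.deriv_eq (((Continuous.prodMk_left p.2).tendsto p.1).eventually h)

lemma pdV_congr (h : f =ᶠ[𝓝 p] g) : pdV f p = pdV g p :=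
  Filter.EventuallyEq.deriv_eq (((Continuous.prodMk_right p.1).tendsto p.2).eventually h)

variable {F : ℂ → ℂ × ℂ × ℂ}

lemma pdU_re3_comp (hF : DifferentiableAt ℂ F (zCoord p)) :
    pdU (fun q => re3 (F (zCoord q))) p = re3 (deriv F (zCoord p)) := by
  have h := hF.hasDerivAt.scomp p.1 (hasDerivAt_zCoord_left p)
  rw [one_smul] at h
  exact (re3.hasFDerivAt.comp_hasDerivAt p.1 h).deriv

lemma pdV_re3_comp (hF : DifferentiableAt ℂ F (zCoord p)) :
    pdV (fun q => re3 (F (zCoord q))) p = re3 (Complex.I • deriv F (zCoord p)) := by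
  have h := hF.hasDerivAt.scomp p.2 (hasDerivAt_zCoord_right p)
  exact (re3.hasFDerivAt.comp_hasDerivAt p.2 h).deriv

end PartialDerivatives

section ScherkTangents

variable {w : ℝ → ℂ} {w' : ℂ} {t : ℝ}

lemma hasDerivAt_re (hw : HasDerivAt w w' t) : HasDerivAt (fun s => (w s).re) w'.re t :=
  Complex.reCLM.hasFDerivAt.comp_hasDerivAt t hw

lemma hasDerivAt_im (hw : HasDerivAt w w' t) : HasDerivAt (fun s => (w s).im) w'.im t :=
  Complex.imCLM.hasFDerivAt.comp_hasDerivAt t hw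

lemma hasDerivAt_arctan_im_div_re (hw : HasDerivAt w w' t) (hre : (w t).re ≠ 0) :
    HasDerivAt (fun s => arctan ((w s).im / (w s).re)) (w' / w t).im t := by
  refine ((hasDerivAt_im hw).div (hasDerivAt_re hw) hre).arctan.congr_deriv ?_
  rw [Complex.div_im, Complex.normSq_apply, Pi.div_apply]
  field_simp

lemma hasDerivAt_half_log_normSq (hw : HasDerivAt w w' t) (h0 : w t ≠ 0) :
    HasDerivAt (fun s => 1 / 2 * log (Complex.normSq (w s))) (w' / w t).re t := by
  have hpos : Complex.normSq (w t) ≠ 0 := by simpa using h0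
  have hsq : HasDerivAt (fun s => Complex.normSq (w s))
      (2 * (w'.re * (w t).re + w'.im * (w t).im)) t := by
    have hre := hasDerivAt_re hw
    have him := hasDerivAt_im hw
    simp only [Complex.normSq_apply]
    exact ((hre.mul hre).add (him.mul him)).congr_deriv (by ring)
  refine ((hsq.log hpos).const_mul (1 / 2)).congr_deriv ?_
  rw [Complex.div_re]
  field_simp

lemma re_add_div_sub (z a : ℂ) :
    ((z + a) / (z - a)).re = (‖z‖ ^ 2 - ‖a‖ ^ 2) / Complex.normSq (z - a) := by
  rw [Complex.div_re, ← add_div]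
  simp only [sq_norm_eq_re_sq_add_im_sq, Complex.add_re, Complex.add_im, Complex.sub_re,
    Complex.sub_im]
  ring

lemma im_add_div_sub (z a : ℂ) :
    ((z + a) / (z - a)).im = 2 * (a * conj z).im / Complex.normSq (z - a) := by
  rw [Complex.div_im, ← sub_div]
  simp only [Complex.add_re, Complex.add_im, Complex.sub_re, Complex.sub_im, Complex.mul_im,
    Complex.conj_re, Complex.conj_im]
  ring

variable {z : ℝ → ℂ} {z' : ℂ}

lemma hasDerivAt_arctan_two_mul_im_div (hz : HasDerivAt z z' t) {a : ℂ} (ha : ‖z t‖ ≠ ‖a‖) :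
    HasDerivAt (fun s => arctan (2 * (a * conj (z s)).im / (‖z s‖ ^ 2 - ‖a‖ ^ 2)))
      (2 * Complex.I * a * z' / (z t ^ 2 - a ^ 2)).re t := by
  have hsub : z t - a ≠ 0 := sub_ne_zero.mpr fun h => ha (h ▸ rfl)
  have hadd : z t + a ≠ 0 := fun h => ha (by rw [eq_neg_of_add_eq_zero_left h, norm_neg])
  have hre : ((z t + a) / (z t - a)).re ≠ 0 := by
    rw [re_add_div_sub]
    have hsq : ‖z t‖ ^ 2 ≠ ‖a‖ ^ 2 := by simpa using ha
    exact div_ne_zero (sub_ne_zero.mpr hsq) (by simpa using hsub)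
  have hw := hasDerivAt_arctan_im_div_re ((hz.add_const a).div (hz.sub_const a) hsub) hre
  refine (hw.congr_deriv ?_).congr_of_eventuallyEq ?_
  · have hlog : 2 * Complex.I * a * z' / (z t ^ 2 - a ^ 2) = -Complex.I *
        ((z' * (z t - a) - (z t + a) * z') / (z t - a) ^ 2 / ((z t + a) / (z t - a))) := by
      rw [sq_sub_sq]
      field_simp
      ring
    simp [hlog]
  · filter_upwards [hz.continuousAt.eventually_ne (sub_ne_zero.mp hsub)] with s hs
    have hnormSq : Complex.normSq (z s - a) ≠ 0 := by simpa [sub_eq_zero] using hs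
    simp only [Pi.div_apply]
    rw [re_add_div_sub, im_add_div_sub, div_div_div_cancel_right₀ hnormSq]

lemma scherk_eq_arctan_log (z : ℂ) :
    scherk (z.re, z.im) =
      (arctan (2 * (Complex.I * conj z).im / (‖z‖ ^ 2 - ‖Complex.I‖ ^ 2)),
        arctan (2 * (1 * conj z).im / (‖z‖ ^ 2 - ‖(1 : ℂ)‖ ^ 2)),
        1 / 2 * log (Complex.normSq ((z ^ 2 + 1) / (z ^ 2 - 1)))) := by
  rw [scherk, Complex.normSq_div]
  refine congrArg₂ Prod.mk (congrArg arctan ?_) (congrArg₂ Prod.mk (congrArg arctan ?_)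
    (congrArg (1 / 2 * log ·) (congrArg₂ (· / ·) ?_ ?_)))
  · simp [sq_norm_eq_re_sq_add_im_sq]
  · simp [sq_norm_eq_re_sq_add_im_sq]
  · simp only [Complex.normSq_apply, pow_two, Complex.add_re, Complex.add_im, Complex.mul_re,
      Complex.mul_im, Complex.one_re, Complex.one_im]
    ring
  · simp only [Complex.normSq_apply, pow_two, Complex.sub_re, Complex.sub_im, Complex.mul_re,
      Complex.mul_im, Complex.one_re, Complex.one_im]
    ring

lemma one_sub_pow_four_ne_zero {z : ℂ} (hz : ‖z‖ ≠ 1) : 1 - z ^ 4 ≠ 0 := fun h =>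
  hz (Complex.norm_eq_one_of_pow_eq_one (sub_eq_zero.mp h).symm four_ne_zero)

lemma hasDerivAt_scherk_comp (hz : HasDerivAt z z' t) (h1 : ‖z t‖ ≠ 1) :
    HasDerivAt (fun s => scherk ((z s).re, (z s).im))
      (re3 ((z' * scherkDensity (z t)) • isotropicVec (z t))) t := by
  have hfour := one_sub_pow_four_ne_zero h1
  obtain ⟨hadd, hsub⟩ : z t ^ 2 + 1 ≠ 0 ∧ z t ^ 2 - 1 ≠ 0 := by
    rw [← mul_ne_zero_iff, ← neg_ne_zero]
    convert hfour using 1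
    ring
  have hsq : HasDerivAt (fun s => z s ^ 2) (2 * z t * z') t :=
    (hz.fun_pow 2).congr_deriv (by norm_num)
  have hfst := hasDerivAt_arctan_two_mul_im_div hz (a := Complex.I) (by simpa using h1)
  have hsnd := hasDerivAt_arctan_two_mul_im_div hz (a := 1) (by simpa using h1)
  have hthd := hasDerivAt_half_log_normSq ((hsq.add_const 1).fun_div (hsq.sub_const 1) hsub)
    (div_ne_zero hadd hsub)
  simp only [scherk_eq_arctan_log]
  refine (hfst.prodMk (hsnd.prodMk hthd)).congr_deriv ?_
  have hfactor : 1 - z t ^ 4 = -((z t ^ 2 + 1) * (z t ^ 2 - 1)) := by ring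
  simp only [re3_apply, scherkDensity, isotropicVec, hfactor, Prod.smul_mk, smul_eq_mul,
    Complex.I_sq, one_pow]
  refine congrArg₂ Prod.mk (congrArg _ ?_) (congrArg₂ Prod.mk (congrArg _ ?_) (congrArg _ ?_))
  · rw [sub_neg_eq_add, mul_assoc 2, Complex.I_mul_I]
    field_simp
  · field_simp
  · field_simp
    ring

lemma σu_eq {p : ℝ × ℝ} (hp : ‖zCoord p‖ ≠ 1) :
    σu p = re3 (scherkDensity (zCoord p) • isotropicVec (zCoord p)) := by
  have h := (hasDerivAt_scherk_comp (hasDerivAt_zCoord_left p) hp).deriv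
  rwa [one_mul] at h

lemma σv_eq {p : ℝ × ℝ} (hp : ‖zCoord p‖ ≠ 1) :
    σv p = re3 ((Complex.I * scherkDensity (zCoord p)) • isotropicVec (zCoord p)) :=
  (hasDerivAt_scherk_comp (hasDerivAt_zCoord_right p) hp).deriv

end ScherkTangents

section FundamentalForms

variable {p : ℝ × ℝ}

/-- The conformal factor `λ` of the Scherk parametrization, i.e. `g = λ (du² + dv²)`. -/
def conformalFactor (p : ℝ × ℝ) : ℝ :=
  ‖scherkDensity (zCoord p)‖ ^ 2 * (1 + ‖zCoord p‖ ^ 2) ^ 2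

lemma scherkDensity_ne_zero {z : ℂ} (hz : ‖z‖ ≠ 1) : scherkDensity z ≠ 0 :=
  div_ne_zero two_ne_zero (one_sub_pow_four_ne_zero hz)

lemma conformalFactor_pos (hp : ‖zCoord p‖ ≠ 1) : 0 < conformalFactor p := by
  have := norm_pos_iff.mpr (scherkDensity_ne_zero hp)
  unfold conformalFactor
  positivity

lemma g11_eq (hp : ‖zCoord p‖ ≠ 1) : g11 p = conformalFactor p := by
  rw [g11, σu_eq hp, dot3_re3_smul_isotropicVec, Complex.mul_conj', conformalFactor]
  norm_cast

lemma g12_eq (hp : ‖zCoord p‖ ≠ 1) : g12 p = 0 := by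
  rw [g12, σu_eq hp, σv_eq hp, dot3_re3_smul_isotropicVec, map_mul, Complex.conj_I,
    mul_left_comm, Complex.mul_conj, neg_mul, Complex.neg_re, Complex.I_mul_re, Complex.ofReal_im,
    neg_zero, neg_zero, zero_mul]

lemma g22_eq (hp : ‖zCoord p‖ ≠ 1) : g22 p = conformalFactor p := by
  rw [g22, σv_eq hp, dot3_re3_smul_isotropicVec, Complex.mul_conj', conformalFactor, norm_mul,
    Complex.norm_I, one_mul]
  norm_cast

lemma detg_eq (hp : ‖zCoord p‖ ≠ 1) : detg p = conformalFactor p ^ 2 := by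
  rw [detg, g11_eq hp, g12_eq hp, g22_eq hp]
  ring

lemma NS_eq (hp : ‖zCoord p‖ ≠ 1) :
    NS p = (1 + ‖zCoord p‖ ^ 2)⁻¹ • stereoNormal (zCoord p) := by
  set f := scherkDensity (zCoord p)
  have hf0 : 0 < ‖f‖ := norm_pos_iff.mpr (scherkDensity_ne_zero hp)
  have him : (conj f * (Complex.I * f)).im = ‖f‖ ^ 2 := by
    rw [mul_left_comm, Complex.conj_mul', Complex.I_mul_im]
    norm_cast
  have : 0 < 1 + ‖zCoord p‖ ^ 2 := by positivity
  rw [NS, σu_eq hp, σv_eq hp, cross3_re3_smul_isotropicVec, him, norm3_smul, norm3_stereoNormal,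
    abs_of_pos (by positivity), smul_smul]
  congr 1
  field_simp

lemma dot3_re3_deriv_smul_isotropicVec_stereoNormal {c : ℂ → ℂ} {z : ℂ}
    (hc : DifferentiableAt ℂ c z) (a : ℂ) :
    dot3 (re3 (a • deriv (fun w => c w • isotropicVec w) z)) (stereoNormal z) =
      -2 * (a * c z).re * (1 + ‖z‖ ^ 2) := by
  rw [deriv_fun_smul hc (hasDerivAt_isotropicVec z).differentiableAt, smul_add, map_add,
    dot3_add_left, smul_smul, smul_smul, dot3_re3_smul_isotropicVec_stereoNormal,
    dot3_re3_smul_deriv_isotropicVec_stereoNormal, add_zero]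

lemma differentiableAt_scherkDensity {z : ℂ} (hz : ‖z‖ ≠ 1) :
    DifferentiableAt ℂ scherkDensity z := by
  have := one_sub_pow_four_ne_zero hz
  unfold scherkDensity
  fun_prop (disch := assumption)

lemma eventually_norm_zCoord_ne_one (hp : ‖zCoord p‖ ≠ 1) : ∀ᶠ q in 𝓝 p, ‖zCoord q‖ ≠ 1 :=
  zCoord.continuous.norm.continuousAt.eventually_ne hp

lemma dot3_re3_deriv_smul_isotropicVec_NS (hp : ‖zCoord p‖ ≠ 1) {c : ℂ → ℂ}
    (hc : DifferentiableAt ℂ c (zCoord p)) (a : ℂ) :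
    dot3 (re3 (a • deriv (fun w => c w • isotropicVec w) (zCoord p))) (NS p) =
      -2 * (a * c (zCoord p)).re := by
  have hpos : 1 + ‖zCoord p‖ ^ 2 ≠ 0 := by positivity
  rw [NS_eq hp, dot3_smul_right, dot3_re3_deriv_smul_isotropicVec_stereoNormal hc]
  field_simp

lemma dot3_pdU_NS (hp : ‖zCoord p‖ ≠ 1) {f : ℝ × ℝ → ℝ × ℝ × ℝ} {c : ℂ → ℂ}
    (hc : DifferentiableAt ℂ c (zCoord p))
    (hf : f =ᶠ[𝓝 p] fun q => re3 (c (zCoord q) • isotropicVec (zCoord q))) :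
    dot3 (pdU f p) (NS p) = -2 * (c (zCoord p)).re := by
  have hF := hc.fun_smul (hasDerivAt_isotropicVec (zCoord p)).differentiableAt
  have h := dot3_re3_deriv_smul_isotropicVec_NS hp hc 1
  rw [one_smul, one_mul] at h
  rw [pdU_congr hf, pdU_re3_comp hF, h]

lemma dot3_pdV_NS (hp : ‖zCoord p‖ ≠ 1) {f : ℝ × ℝ → ℝ × ℝ × ℝ} {c : ℂ → ℂ}
    (hc : DifferentiableAt ℂ c (zCoord p))
    (hf : f =ᶠ[𝓝 p] fun q => re3 (c (zCoord q) • isotropicVec (zCoord q))) :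
    dot3 (pdV f p) (NS p) = -2 * (Complex.I * c (zCoord p)).re := by
  have hF := hc.fun_smul (hasDerivAt_isotropicVec (zCoord p)).differentiableAt
  rw [pdV_congr hf, pdV_re3_comp hF, dot3_re3_deriv_smul_isotropicVec_NS hp hc]

lemma h11_eq (hp : ‖zCoord p‖ ≠ 1) : h11 p = -2 * (scherkDensity (zCoord p)).re :=
  dot3_pdU_NS hp (differentiableAt_scherkDensity hp)
    ((eventually_norm_zCoord_ne_one hp).mono fun _ hq => σu_eq hq)

lemma h12_eq (hp : ‖zCoord p‖ ≠ 1) : h12 p = 2 * (scherkDensity (zCoord p)).im := by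
  rw [h12, σuv, dot3_pdV_NS hp (differentiableAt_scherkDensity hp)
    ((eventually_norm_zCoord_ne_one hp).mono fun _ hq => σu_eq hq), Complex.I_mul_re]
  ring

lemma h22_eq (hp : ‖zCoord p‖ ≠ 1) : h22 p = 2 * (scherkDensity (zCoord p)).re := by
  rw [h22, σvv, dot3_pdV_NS hp ((differentiableAt_scherkDensity hp).const_mul Complex.I)
    ((eventually_norm_zCoord_ne_one hp).mono fun _ hq => σv_eq hq), ← mul_assoc,
    Complex.I_mul_I, neg_one_mul, Complex.neg_re]
  ring

lemma κ_mul_conformalFactor (hp : ‖zCoord p‖ ≠ 1) :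
    κ p * conformalFactor p = -4 / (1 + ‖zCoord p‖ ^ 2) ^ 2 := by
  have hf := norm_ne_zero_iff.mpr (scherkDensity_ne_zero hp)
  have hpos : 1 + ‖zCoord p‖ ^ 2 ≠ 0 := by positivity
  have hdet : h11 p * h22 p - h12 p ^ 2 = -4 * ‖scherkDensity (zCoord p)‖ ^ 2 := by
    rw [h11_eq hp, h12_eq hp, h22_eq hp, sq_norm_eq_re_sq_add_im_sq]
    ring
  rw [κ, hdet, detg_eq hp, conformalFactor]
  field_simp

end FundamentalForms

section SecondVariation

lemma secondVariation_integrand_eq (φ : ℝ × ℝ → ℝ) {p : ℝ × ℝ} (hp : ‖zCoord p‖ ≠ 1) :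
    (ginv11 p * pdU φ p ^ 2 + 2 * ginv12 p * pdU φ p * pdV φ p + ginv22 p * pdV φ p ^ 2
      + 2 * κ p * φ p ^ 2) * √(detg p) =
      pdU φ p ^ 2 + pdV φ p ^ 2 - 8 * φ p ^ 2 / (1 + p.1 ^ 2 + p.2 ^ 2) ^ 2 := by
  have hpos := conformalFactor_pos hp
  have hκ := κ_mul_conformalFactor hp
  have hnorm : ‖zCoord p‖ ^ 2 = p.1 ^ 2 + p.2 ^ 2 := sq_norm_eq_re_sq_add_im_sq _
  rw [hnorm, ← add_assoc] at hκ
  rw [ginv11, ginv12, ginv22, g11_eq hp, g12_eq hp, g22_eq hp, detg_eq hp, sqrt_sq hpos.le]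
  calc
    _ = pdU φ p ^ 2 + pdV φ p ^ 2 + 2 * φ p ^ 2 * (κ p * conformalFactor p) := by
      field_simp
      ring
    _ = _ := by
      rw [hκ]
      ring

lemma ae_norm_zCoord_ne_one : ∀ᵐ p, ‖zCoord p‖ ≠ 1 := by
  have hsphere : ∀ᵐ z : ℂ, ‖z‖ ≠ 1 := by
    simpa [ae_iff, Metric.sphere, dist_zero_right] using Measure.addHaar_sphere volume (0 : ℂ) 1
  exact Complex.volume_preserving_equiv_real_prod.symm.quasiMeasurePreserving.ae hsphere

lemma Q_eq (φ : ℝ × ℝ → ℝ) :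
    Q φ = ∫ p in Ω₀,
      (pdU φ p ^ 2 + pdV φ p ^ 2 - 8 * φ p ^ 2 / (1 + p.1 ^ 2 + p.2 ^ 2) ^ 2) :=
  integral_congr_ae <| ae_restrict_of_ae <|
    ae_norm_zCoord_ne_one.mono fun _ hp => secondVariation_integrand_eq φ hp

lemma Q_comp_fst (φ : ℝ → ℝ) :
    Q (fun p => φ p.1) =
      ∫ p in Ω₀, (deriv φ p.1 ^ 2 - 8 * φ p.1 ^ 2 / (1 + p.1 ^ 2 + p.2 ^ 2) ^ 2) := by
  simp [Q_eq, pdU, pdV]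

lemma Q_comp_snd (φ : ℝ → ℝ) : Q (fun p => φ p.2) = Q (fun p => φ p.1) := by
  rw [Q_comp_fst, Q_eq, Ω₀, Measure.volume_eq_prod, ← setIntegral_prod_swap]
  simp [pdU, pdV, add_right_comm]

end SecondVariation

section RationalBound

/-- A cubic minorant of `s ↦ s⁻²`, touching it to second order at the positive roots of
`1 - p s + q s²`: the difference is `(1 - p s + q s²)² (1 + 2 p s) / s²`. -/
def invSqMinorant (p q s : ℝ) : ℝ :=
  3 * p ^ 2 - 2 * q - 2 * p * (p ^ 2 + q) * s + q * (4 * p ^ 2 - q) * s ^ 2 - 2 * p * q ^ 2 * s ^ 3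

lemma invSqMinorant_le {p s : ℝ} (hp : 0 ≤ p) (q : ℝ) (hs : 0 < s) :
    invSqMinorant p q s ≤ 1 / s ^ 2 := by
  have hdiff : 0 ≤ (1 - p * s + q * s ^ 2) ^ 2 * (1 + 2 * p * s) := by positivity
  rw [le_div_iff₀ (by positivity), invSqMinorant]
  linarith

lemma integral_even_polynomial {n : ℕ} (c : Fin n → ℝ) :
    ∫ x in (-1 : ℝ)..1, ∑ i, c i * x ^ (2 * (i : ℕ)) = ∑ i, 2 * c i / (2 * (i : ℕ) + 1) := by
  rw [intervalIntegral.integral_finsetSum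
    fun i _ => Continuous.intervalIntegrable (by fun_prop) _ _]
  refine Finset.sum_congr rfl fun i _ => ?_
  rw [intervalIntegral.integral_const_mul, integral_pow, one_pow,
    Odd.neg_one_pow (odd_two_mul_add_one _)]
  push_cast
  ring

lemma integral_invSqMinorant_add_sq (p q s : ℝ) :
    ∫ v in (-1 : ℝ)..1, invSqMinorant p q (s + v ^ 2) =
      2 * invSqMinorant p q s
        + 2 / 3 * (-2 * p * (p ^ 2 + q) + 2 * q * (4 * p ^ 2 - q) * s - 6 * p * q ^ 2 * s ^ 2)
        + 2 / 5 * (q * (4 * p ^ 2 - q) - 6 * p * q ^ 2 * s)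
        - 4 / 7 * p * q ^ 2 := by
  have h := integral_even_polynomial
    ![invSqMinorant p q s,
      -2 * p * (p ^ 2 + q) + 2 * q * (4 * p ^ 2 - q) * s - 6 * p * q ^ 2 * s ^ 2,
      q * (4 * p ^ 2 - q) - 6 * p * q ^ 2 * s,
      -2 * p * q ^ 2]
  simp only [Fin.sum_univ_succ, Fin.sum_univ_zero, Matrix.cons_val_zero, Matrix.cons_val_succ,
    Fin.val_zero, Fin.val_succ] at h
  refine (intervalIntegral.integral_congr fun v _ => ?_).trans (h.trans ?_)
  · simp only [invSqMinorant]
    ring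
  · norm_num
    ring

variable {E : Type*} [NormedAddCommGroup E] {f : ℝ × ℝ → E}

lemma integrableOn_Ω₀ (hf : Continuous f) : IntegrableOn f Ω₀ :=
  (hf.continuousOn.integrableOn_compact (isCompact_Icc.prod isCompact_Icc)).mono_set
    (Set.prod_mono Set.Ioo_subset_Icc_self Set.Ioo_subset_Icc_self)

lemma setIntegral_Ω₀ [NormedSpace ℝ E] (hf : Continuous f) :
    ∫ p in Ω₀, f p = ∫ u in (-1 : ℝ)..1, ∫ v in (-1 : ℝ)..1, f (u, v) := by
  have hint := integrableOn_Ω₀ hf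
  rw [Ω₀, Measure.volume_eq_prod] at hint ⊢
  rw [setIntegral_prod _ hint]
  simp only [intervalIntegral.integral_of_le (by norm_num : (-1 : ℝ) ≤ 1),
    integral_Ioc_eq_integral_Ioo]

lemma Q_comp_fst_le {φ : ℝ → ℝ} (hφ : ContDiff ℝ 1 φ) {p : ℝ} (hp : 0 ≤ p) (q : ℝ) :
    Q (fun x => φ x.1) ≤ ∫ u in (-1 : ℝ)..1,
      (2 * deriv φ u ^ 2
        - 8 * φ u ^ 2 * ∫ v in (-1 : ℝ)..1, invSqMinorant p q (1 + u ^ 2 + v ^ 2)) := by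
  have := hφ.continuous_deriv le_rfl
  have hφ := hφ.continuous
  have hQ : Continuous fun x : ℝ × ℝ =>
      deriv φ x.1 ^ 2 - 8 * φ x.1 ^ 2 / (1 + x.1 ^ 2 + x.2 ^ 2) ^ 2 :=
    .sub (by fun_prop) (.div (by fun_prop) (by fun_prop) fun x => by positivity)
  have hminorant : Continuous (invSqMinorant p q) := by
    unfold invSqMinorant
    fun_prop
  have hbound : Continuous fun x : ℝ × ℝ =>
      deriv φ x.1 ^ 2 - 8 * φ x.1 ^ 2 * invSqMinorant p q (1 + x.1 ^ 2 + x.2 ^ 2) := by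
    fun_prop
  calc
    Q (fun x => φ x.1)
      ≤ ∫ x in Ω₀, (deriv φ x.1 ^ 2
          - 8 * φ x.1 ^ 2 * invSqMinorant p q (1 + x.1 ^ 2 + x.2 ^ 2)) := by
        rw [Q_comp_fst]
        refine setIntegral_mono (integrableOn_Ω₀ hQ) (integrableOn_Ω₀ hbound) fun x => ?_
        have hle := invSqMinorant_le hp q (by positivity : 0 < 1 + x.1 ^ 2 + x.2 ^ 2)
        simp only [← mul_one_div (8 * φ x.1 ^ 2)]
        gcongr
    _ = _ := by
        rw [setIntegral_Ω₀ hbound]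
        refine intervalIntegral.integral_congr fun u _ => ?_
        simp only
        rw [intervalIntegral.integral_sub (Continuous.intervalIntegrable (by fun_prop) _ _)
            (Continuous.intervalIntegrable (by fun_prop) _ _),
          intervalIntegral.integral_const, intervalIntegral.integral_const_mul]
        norm_num

end RationalBound

section TestFunction

lemma contDiff_sub_pow_five {n : WithTop ℕ∞} : ContDiff ℝ n fun x : ℝ => x - x ^ 5 / 4 := by
  fun_prop

lemma deriv_sub_pow_five (x : ℝ) : deriv (fun x : ℝ => x - x ^ 5 / 4) x = 1 - 5 * x ^ 4 / 4 :=
  (((hasDerivAt_id x).sub ((hasDerivAt_pow 5 x).div_const 4)).congr_deriv (by norm_num)).deriv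

lemma Q_sub_pow_five_fst_neg : Q (fun p => p.1 - p.1 ^ 5 / 4) < 0 := by
  -- `1 - 9/8 s + 3/10 s²` has both roots in `[1, 3]`, the range of `1 + u² + v²`; the entries of
  -- `c` are the coefficients of the bound of `Q_comp_fst_le` after integration over `v`.
  let c : Fin 9 → ℝ := ![2, -8562 / 875, 17093 / 2000, -8763 / 1750, -1633 / 4000, 30369 / 7000,
    -24747 / 32000, -99 / 160, 81 / 400]
  calc
    _ ≤ ∫ u in (-1 : ℝ)..1, (2 * deriv (fun x : ℝ => x - x ^ 5 / 4) u ^ 2 - 8 * (u - u ^ 5 / 4) ^ 2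
          * ∫ v in (-1 : ℝ)..1, invSqMinorant (9 / 8) (3 / 10) (1 + u ^ 2 + v ^ 2)) :=
      Q_comp_fst_le contDiff_sub_pow_five (by norm_num) _
    _ = ∫ u in (-1 : ℝ)..1, ∑ i, c i * u ^ (2 * (i : ℕ)) := by
      refine intervalIntegral.integral_congr fun u _ => ?_
      simp only [deriv_sub_pow_five, integral_invSqMinorant_add_sq]
      simp only [invSqMinorant, c, Fin.sum_univ_succ, Fin.sum_univ_zero, Matrix.cons_val_zero,
        Matrix.cons_val_succ, Fin.val_zero, Fin.val_succ]
      ring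
    _ = ∑ i, 2 * c i / (2 * (i : ℕ) + 1) := integral_even_polynomial c
    _ < 0 := by
      norm_num [c, Fin.sum_univ_succ]

end TestFunction

/-- the second variation of the fundamental Scherk surface at
`φ²(u,v) = u − u⁵/4` and at `φ³(u,v) = v − v⁵/4` is negative. -/
theorem scherk_secondVariation_phi2_phi3_neg :
    Q (fun p => p.1 - p.1 ^ 5 / 4) < 0 ∧ Q (fun p => p.2 - p.2 ^ 5 / 4) < 0 :=
  ⟨Q_sub_pow_five_fst_neg, (Q_comp_snd fun x => x - x ^ 5 / 4).trans_lt Q_sub_pow_five_fst_neg⟩
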